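/- Let ν be a Borel measure on (−∞, 0) with ∫ min(1, x²) ν(dx) < ∞ but ∫ min(1, |x|) ν(dx) = ∞. Then for every q ≥ 1 the integrand x ↦ e^{qx} − 1 + q(1 − e^x) is nonnegative on (−∞, 0), and the function g(q) = ∫_{(−∞,0)} (e^{qx} − 1 + q(1 − e^x)) ν(dx) satisfies g(q)/q → ∞ as q → ∞; in particular g grows faster at infinity than any linear function of q. -/

import Mathlib

open MeasureTheory Filter

/-!
Dividing the integrand by `q` gives `(e^{qx} - 1) / q + (1 - e^x)`, which for `x ≤ 0` is at most
`1 - e^x` and converges to it as `q → ∞`. Hence, by Fatou's lemma, `g(q) / q` always converges to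
`∫ (1 - e^x) ν(dx)`, finite or not. Since `min(1, |x|) ≤ 2 (1 - e^x)` for `x ≤ 0`, this limit is
infinite as soon as `∫ min(1, |x|) ν(dx) = ∞`.
-/

theorem tendsto_lintegral_filter_of_ae_le_of_ae_tendsto {α ι : Type*} [MeasurableSpace α]
    {μ : Measure α} {l : Filter ι} [l.IsCountablyGenerated] {F : ι → α → ENNReal} {f : α → ENNReal}
    (hF : ∀ i, AEMeasurable (F i) μ) (hle : ∀ᶠ i in l, ∀ᵐ a ∂μ, F i a ≤ f a)
    (hlim : ∀ᵐ a ∂μ, Tendsto (fun i ↦ F i a) l (nhds (f a))) :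
    Tendsto (fun i ↦ ∫⁻ a, F i a ∂μ) l (nhds (∫⁻ a, f a ∂μ)) := by
  rcases l.eq_or_neBot with rfl | _
  · exact tendsto_bot
  · refine tendsto_of_le_liminf_of_limsup_le ?_ ?_
    · calc ∫⁻ a, f a ∂μ = ∫⁻ a, liminf (fun i ↦ F i a) l ∂μ :=
            lintegral_congr_ae (hlim.mono fun _ ha ↦ ha.liminf_eq.symm)
        _ ≤ liminf (fun i ↦ ∫⁻ a, F i a ∂μ) l := lintegral_liminf_le' hF
    · exact limsup_le_of_le (by isBoundedDefault) (hle.mono fun _ hi ↦ lintegral_mono_ae hi)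

/-- The integrand of `g`: the increment `e^{qx} - 1` of the exponential, compensated by the multiple
of `1 - e^x` which makes it vanish at `q = 1`. -/
noncomputable def compensatedExp (q x : ℝ) : ℝ :=
  Real.exp (q * x) - 1 + q * (1 - Real.exp x)

theorem measurable_compensatedExp (q : ℝ) : Measurable (compensatedExp q) := by
  unfold compensatedExp
  fun_prop

theorem compensatedExp_nonneg {q : ℝ} (hq : 1 ≤ q) (x : ℝ) : 0 ≤ compensatedExp q x := by
  have bernoulli : 1 + q * (Real.exp x - 1) ≤ (1 + (Real.exp x - 1)) ^ q :=
    one_add_mul_self_le_rpow_one_add (by linarith [Real.exp_pos x]) hq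
  rw [add_sub_cancel, ← Real.exp_mul, mul_comm x] at bernoulli
  unfold compensatedExp
  linarith

theorem compensatedExp_div_le {q x : ℝ} (hq : 0 < q) (hx : x ≤ 0) :
    compensatedExp q x / q ≤ 1 - Real.exp x := by
  have hexp : Real.exp (q * x) ≤ 1 :=
    Real.exp_le_one_iff.2 (mul_nonpos_of_nonneg_of_nonpos hq.le hx)
  rw [div_le_iff₀ hq, compensatedExp]
  linarith

theorem tendsto_compensatedExp_div_atTop {x : ℝ} (hx : x ≤ 0) :
    Tendsto (fun q : ℝ ↦ compensatedExp q x / q) atTop (nhds (1 - Real.exp x)) := by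
  have hvanish : Tendsto (fun q : ℝ ↦ (Real.exp (q * x) - 1) / q) atTop (nhds 0) := by
    refine tendsto_bdd_div_atTop_nhds_zero (b := -1) (B := 0) ?_ ?_ tendsto_id
    · exact .of_forall fun q ↦ by linarith [Real.exp_pos (q * x)]
    · filter_upwards [eventually_ge_atTop 0] with q hq
      linarith [Real.exp_le_one_iff.2 (mul_nonpos_of_nonneg_of_nonpos hq hx)]
  have hsum := hvanish.add_const (1 - Real.exp x)
  rw [zero_add] at hsum
  refine hsum.congr' ?_
  filter_upwards [eventually_ne_atTop 0] with q hq
  rw [compensatedExp, add_div, mul_div_cancel_left₀ _ hq]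

theorem min_one_abs_le_two_mul_one_sub_exp {x : ℝ} (hx : x ≤ 0) :
    min 1 |x| ≤ 2 * (1 - Real.exp x) := by
  set m := min 1 |x|
  have hm0 : 0 ≤ m := le_min zero_le_one (abs_nonneg x)
  have hm1 : m ≤ 1 := min_le_left 1 |x|
  have hxm : x ≤ -m := le_neg_of_le_neg ((min_le_right 1 |x|).trans_eq (abs_of_nonpos hx))
  have hexp : Real.exp x ≤ 1 - m / 2 :=
    calc Real.exp x ≤ Real.exp (-m) := Real.exp_le_exp.2 hxm
      _ = (Real.exp m)⁻¹ := Real.exp_neg m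
      _ ≤ (1 + m)⁻¹ := by gcongr; linarith [Real.add_one_le_exp m]
      _ ≤ 1 - m / 2 := by
        rw [inv_le_iff_one_le_mul₀ (by positivity)]
        nlinarith [mul_nonneg hm0 (sub_nonneg.2 hm1)]
  linarith

theorem tendsto_lintegral_compensatedExp_div_atTop {μ : Measure ℝ} (hμ : ∀ᵐ x ∂μ, x ≤ 0) :
    Tendsto (fun q ↦ (∫⁻ x, ENNReal.ofReal (compensatedExp q x) ∂μ) / ENNReal.ofReal q)
      atTop (nhds (∫⁻ x, ENNReal.ofReal (1 - Real.exp x) ∂μ)) := by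
  have hlim : Tendsto (fun q ↦ ∫⁻ x, ENNReal.ofReal (compensatedExp q x / q) ∂μ)
      atTop (nhds (∫⁻ x, ENNReal.ofReal (1 - Real.exp x) ∂μ)) := by
    refine tendsto_lintegral_filter_of_ae_le_of_ae_tendsto
      (fun q ↦ ((measurable_compensatedExp q).div_const q).ennreal_ofReal.aemeasurable) ?_ ?_
    · filter_upwards [eventually_gt_atTop 0] with q hq
      filter_upwards [hμ] with x hx
      exact ENNReal.ofReal_le_ofReal (compensatedExp_div_le hq hx)
    · filter_upwards [hμ] with x hx
      exact ENNReal.tendsto_ofReal (tendsto_compensatedExp_div_atTop hx)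
  refine hlim.congr' ?_
  filter_upwards [eventually_gt_atTop 0] with q hq
  simp_rw [ENNReal.ofReal_div_of_pos hq, div_eq_mul_inv]
  exact lintegral_mul_const _ (measurable_compensatedExp q).ennreal_ofReal

theorem lintegral_min_one_abs_le_two_mul_lintegral_one_sub_exp {μ : Measure ℝ}
    (hμ : ∀ᵐ x ∂μ, x ≤ 0) :
    ∫⁻ x, ENNReal.ofReal (min 1 |x|) ∂μ ≤ 2 * ∫⁻ x, ENNReal.ofReal (1 - Real.exp x) ∂μ := by
  rw [← lintegral_const_mul _ (by fun_prop)]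
  refine lintegral_mono_ae (hμ.mono fun x hx ↦ ?_)
  rw [← ENNReal.ofReal_ofNat 2, ← ENNReal.ofReal_mul zero_le_two]
  exact ENNReal.ofReal_le_ofReal (min_one_abs_le_two_mul_one_sub_exp hx)

theorem stmt_13_general (ν : Measure ℝ)
    (hν : ∫⁻ x in Set.Iio (0 : ℝ), ENNReal.ofReal (min 1 |x|) ∂ν = ⊤) :
    (∀ q : ℝ, 1 ≤ q → ∀ x : ℝ, 0 ≤ Real.exp (q * x) - 1 + q * (1 - Real.exp x)) ∧
    Tendsto
      (fun q : ℝ =>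
        (∫⁻ x in Set.Iio (0 : ℝ),
            ENNReal.ofReal (Real.exp (q * x) - 1 + q * (1 - Real.exp x)) ∂ν) /
          ENNReal.ofReal q)
      atTop (nhds ⊤) := by
  refine ⟨fun q hq ↦ compensatedExp_nonneg hq, ?_⟩
  have hneg : ∀ᵐ x ∂ν.restrict (Set.Iio 0), x ≤ 0 :=
    (ae_restrict_mem measurableSet_Iio).mono fun _ hx ↦ le_of_lt hx
  have hle := lintegral_min_one_abs_le_two_mul_lintegral_one_sub_exp hneg
  have htop : ∫⁻ x in Set.Iio (0 : ℝ), ENNReal.ofReal (1 - Real.exp x) ∂ν = ⊤ := by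
    rw [hν, top_le_iff] at hle
    exact (ENNReal.mul_eq_top.1 hle).elim (·.2) (absurd ·.1 ENNReal.ofNat_ne_top)
  exact htop ▸ tendsto_lintegral_compensatedExp_div_atTop hneg

/-- Let `ν` be a Borel measure carried by `(−∞,0)` with `∫ min(1,x²) ν(dx) < ∞` but
`∫ min(1,|x|) ν(dx) = ∞`. Then for every `q ≥ 1` the integrand
`x ↦ e^{qx} − 1 + q(1 − e^x)` is nonnegative on `(−∞,0)`, and
`g(q) = ∫_{(−∞,0)} (e^{qx} − 1 + q(1 − e^x)) ν(dx)` (an integral in `[0,∞]`) satisfies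
`g(q)/q → ∞` as `q → ∞`. -/
theorem stmt_13 (ν : Measure ℝ)
    (hcar : ν (Set.Ici 0) = 0)
    (hν2 : ∫⁻ x, ENNReal.ofReal (min 1 (x ^ 2)) ∂ν < ⊤)
    (hν1 : ∫⁻ x, ENNReal.ofReal (min 1 |x|) ∂ν = ⊤) :
    (∀ q : ℝ, 1 ≤ q → ∀ x < (0 : ℝ), 0 ≤ Real.exp (q * x) - 1 + q * (1 - Real.exp x)) ∧
    Tendsto
      (fun q : ℝ =>
        (∫⁻ x in Set.Iio (0 : ℝ),
            ENNReal.ofReal (Real.exp (q * x) - 1 + q * (1 - Real.exp x)) ∂ν) /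
          ENNReal.ofReal q)
      atTop (nhds ⊤) := by
  have hneg : ∀ᵐ x ∂ν, x ∈ Set.Iio 0 := by simpa [ae_iff, ← Set.Ici_def] using hcar
  exact (stmt_13_general ν (by rwa [Measure.restrict_eq_self_of_ae_mem hneg])).imp_left
    fun hnonneg q hq x _ ↦ hnonneg q hq x
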